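/- Consider the i-th per-part subsystem, with the interval (LPV) successor map Fi and the worst-case vertex successor map Fvert_i (x, zi, u) := {(x + Ts • u, c x * zi, u') | u' ∈ U}, where c x := aMax i if x ∈ Obs i and c x := bMax i otherwise. Then the maximal invariant subset of D_i for the interval system Fi equals the maximal invariant subset of D_i for the vertex system Fvert_i; i.e. the robust positively invariant set under region-wise interval uncertainty coincides with the one computed at the region-wise worst-case vertex factors. -/

import Mathlib

/-!
The worst-case factor belongs to the factor interval, so every interval-invariant set is
vertex-invariant. Conversely, multiplication is monotone on nonnegative numbers, so lowering
`zᵢ ≥ 0` at fixed `x` and `u` is a simulation of the interval system by the vertex system: any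
factor applied to the smaller value stays below the largest factor applied to the larger one.
Invariance pulls back along a simulation, and the constraint set is closed under lowering `zᵢ`.
-/

/-- A set `A` is (robust positively) invariant for the set-valued successor map `F`. -/
def Invariant {α : Type*} (F : α → Set α) (A : Set α) : Prop :=
  ∀ s ∈ A, F s ⊆ A

/-- The maximal invariant subset of `D`: the union of all invariant subsets of `D`. -/
def maxInv {α : Type*} (F : α → Set α) (D : Set α) : Set α :=
  ⋃₀ {A : Set α | A ⊆ D ∧ Invariant F A}

/-- Region-dependent LPV factor set for one part: decay interval when `x` is in the
observation region, growth interval otherwise. -/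
noncomputable def GammaPart (Obsi : Set (ℝ × ℝ)) (aMin aMax bMin bMax : ℝ)
    (x : ℝ × ℝ) : Set ℝ :=
  open Classical in
  if x ∈ Obsi then Set.Icc aMin aMax else Set.Icc bMin bMax

/-- Interval (LPV) successor map of the per-part subsystem on `(x, zᵢ, u) ∈ ℝ² × ℝ × ℝ²`. -/
def Fpart (Ts : ℝ) (U : Set (ℝ × ℝ)) (Obsi : Set (ℝ × ℝ)) (aMin aMax bMin bMax : ℝ)
    (s : (ℝ × ℝ) × ℝ × (ℝ × ℝ)) : Set ((ℝ × ℝ) × ℝ × (ℝ × ℝ)) :=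
  {p | ∃ u' ∈ U, ∃ γ ∈ GammaPart Obsi aMin aMax bMin bMax s.1,
    p = (s.1 + Ts • s.2.2, γ * s.2.1, u')}

/-- Worst-case vertex factor: `aMax` when observed, `bMax` otherwise. -/
noncomputable def cVert (Obsi : Set (ℝ × ℝ)) (aMax bMax : ℝ) (x : ℝ × ℝ) : ℝ :=
  open Classical in
  if x ∈ Obsi then aMax else bMax

/-- Worst-case vertex successor map of the per-part subsystem. -/
noncomputable def Fvert (Ts : ℝ) (U : Set (ℝ × ℝ)) (Obsi : Set (ℝ × ℝ)) (aMax bMax : ℝ)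
    (s : (ℝ × ℝ) × ℝ × (ℝ × ℝ)) : Set ((ℝ × ℝ) × ℝ × (ℝ × ℝ)) :=
  {p | ∃ u' ∈ U, p = (s.1 + Ts • s.2.2, cVert Obsi aMax bMax s.1 * s.2.1, u')}

/-- Per-part constraint set with critical threshold `zc`. -/
def Dpart (X U : Set (ℝ × ℝ)) (zc : ℝ) : Set ((ℝ × ℝ) × ℝ × (ℝ × ℝ)) :=
  {s | s.1 ∈ X ∧ s.2.1 ∈ Set.Icc (0 : ℝ) zc ∧ s.2.2 ∈ U}

section MaximalInvariantSubset

variable {α β : Type*}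

theorem maxInv_subset {F : α → Set α} {D : Set α} : maxInv F D ⊆ D :=
  Set.sUnion_subset fun _ hA ↦ hA.1

theorem Invariant.subset_maxInv {F : α → Set α} {A D : Set α} (hA : Invariant F A)
    (hAD : A ⊆ D) : A ⊆ maxInv F D :=
  Set.subset_sUnion_of_mem ⟨hAD, hA⟩

theorem invariant_maxInv {F : α → Set α} {D : Set α} : Invariant F (maxInv F D) :=
  fun s ⟨_, ⟨hAD, hA⟩, hs⟩ ↦ (hA s hs).trans (hA.subset_maxInv hAD)

theorem maxInv_mono (F : α → Set α) {D E : Set α} (hDE : D ⊆ E) : maxInv F D ⊆ maxInv F E :=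
  invariant_maxInv.subset_maxInv (maxInv_subset.trans hDE)

theorem maxInv_anti {F G : α → Set α} (hGF : G ≤ F) (D : Set α) :
    maxInv F D ⊆ maxInv G D :=
  Invariant.subset_maxInv (fun s hs ↦ (hGF s).trans (invariant_maxInv s hs)) maxInv_subset

/-- `R` is a simulation of the transition system `F` by `G`: from related states, every step of
`F` is matched by a step of `G` with related outcomes. -/
def IsSimulation (R : SetRel α β) (F : α → Set α) (G : β → Set β) : Prop :=
  ∀ ⦃s t⦄, (s, t) ∈ R → ∀ s' ∈ F s, ∃ t' ∈ G t, (s', t') ∈ R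

theorem IsSimulation.invariant_preimage {R : SetRel α β} {F : α → Set α} {G : β → Set β}
    (hR : IsSimulation R F G) {A : Set β} (hA : Invariant G A) :
    Invariant F (R.preimage A) := by
  rintro s ⟨t, ht, hst⟩ s' hs'
  obtain ⟨t', ht', hst'⟩ := hR hst s' hs'
  exact ⟨t', hA t ht ht', hst'⟩

theorem IsSimulation.preimage_maxInv_subset {R : SetRel α β} {F : α → Set α}
    {G : β → Set β} (hR : IsSimulation R F G) (D : Set β) :
    R.preimage (maxInv G D) ⊆ maxInv F (R.preimage D) :=
  (hR.invariant_preimage invariant_maxInv).subset_maxInv (SetRel.preimage_mono maxInv_subset)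

theorem IsSimulation.maxInv_subset_maxInv {R : SetRel α α} {F G : α → Set α}
    (hR : IsSimulation R F G) {D : Set α} (hrefl : ∀ s ∈ D, (s, s) ∈ R)
    (hD : R.preimage D ⊆ D) : maxInv G D ⊆ maxInv F D := by
  intro s hs
  have hs' : s ∈ R.preimage (maxInv G D) := ⟨s, hs, hrefl s (maxInv_subset hs)⟩
  exact maxInv_mono F hD (hR.preimage_maxInv_subset D hs')

end MaximalInvariantSubset

section ParameterVaryingSystem

variable {X U R : Type*}

/-- The successor map of a system, linear parameter-varying in `z`, on states `(x, z, u)`: `x` moves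
by `f` under the stored input `u`, `z` is scaled by any factor in `Γ x`, and the next input is any
element of `V`. The vertex system is the case of singletons `Γ x`. -/
def lpvSucc [Mul R] (f : X → U → X) (V : Set U) (Γ : X → Set R) (s : X × R × U) :
    Set (X × R × U) :=
  {p | ∃ u' ∈ V, ∃ γ ∈ Γ s.1, p = (f s.1 s.2.2, γ * s.2.1, u')}

theorem lpvSucc_mono [Mul R] (f : X → U → X) (V : Set U) {Γ Γ' : X → Set R} (hΓ : Γ ≤ Γ') :
    lpvSucc f V Γ ≤ lpvSucc f V Γ' :=
  fun s _ ⟨u', hu', γ, hγ, hp⟩ ↦ ⟨u', hu', γ, hΓ s.1 hγ, hp⟩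

/-- The relation "`s` arises from `t` by lowering the coordinate `z` to a nonnegative value", which
simulates an interval system by its vertex system. It is reflexive only where `0 ≤ z`. -/
def lowering (X U R : Type*) [Zero R] [LE R] : SetRel (X × R × U) (X × R × U) :=
  {(s, t) | 0 ≤ s.2.1 ∧ ∃ z, s.2.1 ≤ z ∧ t = (s.1, z, s.2.2)}

variable [MulZeroClass R] [Preorder R] [PosMulMono R] [MulPosMono R]

theorem isSimulation_lowering_lpvSucc (f : X → U → X) (V : Set U) {Γ Γ' : X → Set R}
    (hΓ : ∀ x, ∀ γ ∈ Γ x, 0 ≤ γ) (hΓΓ' : ∀ x, ∀ γ ∈ Γ x, ∃ γ' ∈ Γ' x, γ ≤ γ') :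
    IsSimulation (lowering X U R) (lpvSucc f V Γ) (lpvSucc f V Γ') := by
  rintro ⟨x, z, u⟩ _ ⟨hz, z', hzz', rfl⟩ _ ⟨u', hu', γ, hγ, rfl⟩
  obtain ⟨γ', hγ', hγγ'⟩ := hΓΓ' x γ hγ
  have hγ₀ : 0 ≤ γ := hΓ x γ hγ
  have hscaled : γ * z ≤ γ' * z' := mul_le_mul hγγ' hzz' hz (hγ₀.trans hγγ')
  exact ⟨(f x u, γ' * z', u'), ⟨u', hu', γ', hγ', rfl⟩,
    mul_nonneg hγ₀ hz, γ' * z', hscaled, rfl⟩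

theorem rpi_interval_eq_rpi_vertex_general (f : X → U → X) (V : Set U) {Γ : X → Set R}
    {c : X → R} (hc : ∀ x, IsGreatest (Γ x) (c x)) (hΓ : ∀ x, ∀ γ ∈ Γ x, 0 ≤ γ)
    {D : Set (X × R × U)} (hD₀ : ∀ s ∈ D, 0 ≤ s.2.1)
    (hD : (lowering X U R).preimage D ⊆ D) :
    maxInv (lpvSucc f V Γ) D = maxInv (lpvSucc f V fun x ↦ {c x}) D := by
  have hvertex : lpvSucc f V (fun x ↦ {c x}) ≤ lpvSucc f V Γ :=
    lpvSucc_mono f V fun x ↦ Set.singleton_subset_iff.2 (hc x).1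
  have hsim : IsSimulation (lowering X U R) (lpvSucc f V Γ) (lpvSucc f V fun x ↦ {c x}) :=
    isSimulation_lowering_lpvSucc f V hΓ fun x _ hγ ↦ ⟨c x, rfl, (hc x).2 hγ⟩
  have hrefl : ∀ s ∈ D, (s, s) ∈ lowering X U R := fun s hs ↦ ⟨hD₀ s hs, s.2.1, le_rfl, rfl⟩
  exact (maxInv_anti hvertex D).antisymm (hsim.maxInv_subset_maxInv hrefl hD)

end ParameterVaryingSystem

section PerPartSystem

variable {Obsi : Set (ℝ × ℝ)} {aMin aMax bMin bMax : ℝ}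

theorem isGreatest_cVert (ha : aMin ≤ aMax) (hb : bMin ≤ bMax) (x : ℝ × ℝ) :
    IsGreatest (GammaPart Obsi aMin aMax bMin bMax x) (cVert Obsi aMax bMax x) := by
  unfold GammaPart cVert
  split_ifs
  exacts [isGreatest_Icc ha, isGreatest_Icc hb]

theorem nonneg_of_mem_GammaPart (ha : 0 ≤ aMin) (hb : 0 ≤ bMin) (x : ℝ × ℝ) (γ : ℝ)
    (hγ : γ ∈ GammaPart Obsi aMin aMax bMin bMax x) : 0 ≤ γ := by
  unfold GammaPart at hγ
  split_ifs at hγ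
  exacts [ha.trans hγ.1, hb.trans hγ.1]

theorem Fpart_eq_lpvSucc (Ts : ℝ) (U : Set (ℝ × ℝ)) :
    Fpart Ts U Obsi aMin aMax bMin bMax =
      lpvSucc (fun x u ↦ x + Ts • u) U (GammaPart Obsi aMin aMax bMin bMax) :=
  rfl

theorem Fvert_eq_lpvSucc (Ts : ℝ) (U : Set (ℝ × ℝ)) :
    Fvert Ts U Obsi aMax bMax =
      lpvSucc (fun x u ↦ x + Ts • u) U fun x ↦ {cVert Obsi aMax bMax x} := by
  ext s p
  simp [Fvert, lpvSucc]

theorem preimage_lowering_Dpart_subset (X U : Set (ℝ × ℝ)) (zcrit : ℝ) :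
    (lowering (ℝ × ℝ) (ℝ × ℝ) ℝ).preimage (Dpart X U zcrit) ⊆ Dpart X U zcrit := by
  rintro ⟨x, z, u⟩ ⟨_, ⟨hx, hz', hu⟩, hz, z', hzz', rfl⟩
  exact ⟨hx, ⟨hz, hzz'.trans hz'.2⟩, hu⟩

end PerPartSystem

/-- The maximal robust positively invariant subset of `D_i` for the interval (LPV)
per-part system coincides with the one computed at the region-wise worst-case
vertex factors. -/
theorem rpi_interval_eq_rpi_vertex (Ts : ℝ) (hTs : 0 < Ts)
    (X U Obsi : Set (ℝ × ℝ)) (zcrit aMin aMax bMin bMax : ℝ)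
    (hzcrit : 0 < zcrit)
    (haMin : 0 < aMin) (haMinMax : aMin ≤ aMax)
    (hbMin : 0 < bMin) (hbMinMax : bMin ≤ bMax) :
    maxInv (Fpart Ts U Obsi aMin aMax bMin bMax) (Dpart X U zcrit) =
      maxInv (Fvert Ts U Obsi aMax bMax) (Dpart X U zcrit) := by
  rw [Fpart_eq_lpvSucc, Fvert_eq_lpvSucc]
  exact rpi_interval_eq_rpi_vertex_general _ U (isGreatest_cVert haMinMax hbMinMax)
    (nonneg_of_mem_GammaPart haMin.le hbMin.le) (fun _ hs ↦ hs.2.1.1)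
    (preimage_lowering_Dpart_subset X U zcrit)
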